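/- arXiv:2108.12507 — 4 statements merged into one kernel-verified Lean document; each statement's English description precedes it below -/
import Mathlib

section
/- The time-integration functional J_α is equivalent to the L² norm on [0,T]: one has exp(−(1/2)·∫₀^T α) · (∫₀^T ρ²)^{1/2} ≤ J_α(ρ) ≤ (∫₀^T ρ²)^{1/2}. In particular J_α(ρ) equals the L²([0,T]) norm of ρ when α ≡ 0. -/
open Set

/-- The time-integration functional `J_α` of the paper, defined with interval
integrals over subintervals of `[0,T]`. -/
noncomputable def Jfun (T : ℝ) (α ρ : ℝ → ℝ) : ℝ :=
  Real.sqrt (Real.exp (-(∫ t in (0:ℝ)..T, α t)) *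
    ∫ t in (0:ℝ)..T,
      ((ρ t) ^ 2 + α t * Real.exp (∫ s in t..T, α s) * ∫ s in (0:ℝ)..t, (ρ s) ^ 2))

/-- `J_α` is equivalent to the `L²` norm on `[0,T]`:
`exp(−(1/2)·∫₀ᵀ α) · (∫₀ᵀ ρ²)^{1/2} ≤ J_α(ρ) ≤ (∫₀ᵀ ρ²)^{1/2}`;
in particular `J_α(ρ)` equals the `L²([0,T])` norm of `ρ` when `α ≡ 0` on `[0,T]`. -/
theorem Jfun_equiv_L2 (T : ℝ) (hT : 0 < T) (α ρ : ℝ → ℝ)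
    (hα_cont : ContinuousOn α (Icc 0 T))
    (hα_nonneg : ∀ t ∈ Icc (0:ℝ) T, 0 ≤ α t)
    (hρ_cont : ContinuousOn ρ (Icc 0 T)) :
    (Real.exp (-(1/2) * ∫ t in (0:ℝ)..T, α t) *
        Real.sqrt (∫ t in (0:ℝ)..T, (ρ t) ^ 2) ≤ Jfun T α ρ) ∧
    (Jfun T α ρ ≤ Real.sqrt (∫ t in (0:ℝ)..T, (ρ t) ^ 2)) ∧
    ((∀ t ∈ Icc (0:ℝ) T, α t = 0) →
        Jfun T α ρ = Real.sqrt (∫ t in (0:ℝ)..T, (ρ t) ^ 2)) := by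
  have hT' : (0:ℝ) ≤ T := hT.le
  have hu : uIcc 0 T = Icc 0 T := uIcc_of_le hT'
  have hαi : IntervalIntegrable α MeasureTheory.volume 0 T :=
    ContinuousOn.intervalIntegrable (by rwa [hu])
  have hρ2 : ContinuousOn (fun t => (ρ t) ^ 2) (Icc 0 T) := hρ_cont.pow 2
  have hρi : IntervalIntegrable (fun t => (ρ t) ^ 2) MeasureTheory.volume 0 T :=
    ContinuousOn.intervalIntegrable (by rwa [hu])
  have hF : ContinuousOn (fun t => ∫ s in t..T, α s) (Icc 0 T) := by
    have := intervalIntegral.continuousOn_primitive_interval_left (μ := MeasureTheory.volume)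
      (f := α) (a := 0) (b := T) (by
        rw [hu]; exact hα_cont.integrableOn_Icc)
    rwa [hu] at this
  have hP : ContinuousOn (fun t => ∫ s in (0:ℝ)..t, (ρ s) ^ 2) (Icc 0 T) := by
    have := intervalIntegral.continuousOn_primitive_interval (μ := MeasureTheory.volume)
      (f := fun t => (ρ t) ^ 2) (a := 0) (b := T) (by
        rw [hu]; exact hρ2.integrableOn_Icc)
    rwa [hu] at this
  have hE : ContinuousOn (fun t => α t * Real.exp (∫ s in t..T, α s)) (Icc 0 T) :=
    hα_cont.mul hF.rexp
  have hG := hE.mul hP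
  have hEi : IntervalIntegrable (fun t => α t * Real.exp (∫ s in t..T, α s))
      MeasureTheory.volume 0 T := ContinuousOn.intervalIntegrable (by rwa [hu])
  have hGi : IntervalIntegrable (fun t => α t * Real.exp (∫ s in t..T, α s) *
      ∫ s in (0:ℝ)..t, (ρ s) ^ 2) MeasureTheory.volume 0 T :=
    ContinuousOn.intervalIntegrable (by rw [hu]; exact hG)
  have hEint : ∫ t in (0:ℝ)..T, α t * Real.exp (∫ s in t..T, α s)
      = Real.exp (∫ s in (0:ℝ)..T, α s) - 1 := by
    have := intervalIntegral.integral_eq_sub_of_hasDerivAt_of_le hT'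
      (f := fun t => - Real.exp (∫ s in t..T, α s)) hF.rexp.neg (fun t ht => by
        have hd := intervalIntegral.integral_hasDerivAt_left (f := α) (a := t) (b := T)
          (hαi.mono_set (by
            rw [hu, uIcc_of_le ht.2.le]; exact Icc_subset_Icc_left ht.1.le))
          (ContinuousOn.stronglyMeasurableAtFilter isOpen_Ioo
            (hα_cont.mono Ioo_subset_Icc_self) t ht)
          (hα_cont.continuousAt (Icc_mem_nhds ht.1 ht.2))
        have h2 := hd.exp.neg
        have he : -(Real.exp (∫ s in t..T, α s) * -α t)
            = α t * Real.exp (∫ s in t..T, α s) := by ring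
        rw [he] at h2
        exact h2) hEi
    rw [this]
    simp
    ring
  have hR : 0 ≤ ∫ t in (0:ℝ)..T, (ρ t) ^ 2 :=
    intervalIntegral.integral_nonneg hT' (fun t _ => sq_nonneg _)
  have hG0 : 0 ≤ ∫ t in (0:ℝ)..T, α t * Real.exp (∫ s in t..T, α s) *
      ∫ s in (0:ℝ)..t, (ρ s) ^ 2 :=
    intervalIntegral.integral_nonneg hT' (fun t ht =>
      mul_nonneg (mul_nonneg (hα_nonneg t ht) (Real.exp_pos _).le)
        (intervalIntegral.integral_nonneg ht.1 (fun s _ => sq_nonneg _)))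
  have hG1 : ∫ t in (0:ℝ)..T, α t * Real.exp (∫ s in t..T, α s) *
      ∫ s in (0:ℝ)..t, (ρ s) ^ 2 ≤
      (Real.exp (∫ s in (0:ℝ)..T, α s) - 1) * ∫ t in (0:ℝ)..T, (ρ t) ^ 2 := by
    rw [← hEint, ← intervalIntegral.integral_mul_const]
    refine intervalIntegral.integral_mono_on hT' hGi (hEi.mul_const _) (fun t ht => ?_)
    refine mul_le_mul_of_nonneg_left ?_ (mul_nonneg (hα_nonneg t ht) (Real.exp_pos _).le)
    exact intervalIntegral.integral_mono_interval le_rfl ht.1 ht.2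
      (Filter.Eventually.of_forall (fun s => sq_nonneg _)) hρi
  have hJ : Jfun T α ρ = Real.sqrt (Real.exp (-(∫ t in (0:ℝ)..T, α t)) *
      ((∫ t in (0:ℝ)..T, (ρ t) ^ 2) + ∫ t in (0:ℝ)..T, α t * Real.exp (∫ s in t..T, α s) *
      ∫ s in (0:ℝ)..t, (ρ s) ^ 2)) := by
    unfold Jfun
    rw [intervalIntegral.integral_add hρi hGi]
  have lower : Real.exp (-(1/2) * ∫ t in (0:ℝ)..T, α t) *
        Real.sqrt (∫ t in (0:ℝ)..T, (ρ t) ^ 2) ≤ Jfun T α ρ := by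
    rw [hJ]
    apply Real.le_sqrt_of_sq_le
    rw [mul_pow, Real.sq_sqrt hR, ← Real.exp_nat_mul]
    have he : ((2:ℕ):ℝ) * (-(1/2) * ∫ t in (0:ℝ)..T, α t) = -(∫ t in (0:ℝ)..T, α t) := by
      push_cast; ring
    rw [he]
    exact mul_le_mul_of_nonneg_left (by linarith) (Real.exp_pos _).le
  have upper : Jfun T α ρ ≤ Real.sqrt (∫ t in (0:ℝ)..T, (ρ t) ^ 2) := by
    rw [hJ]
    apply Real.sqrt_le_sqrt
    rw [Real.exp_neg, inv_mul_le_iff₀ (Real.exp_pos _)]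
    linarith
  refine ⟨lower, upper, fun h0 => le_antisymm upper ?_⟩
  have hA : ∫ t in (0:ℝ)..T, α t = 0 := by
    rw [intervalIntegral.integral_congr (g := fun _ => (0:ℝ)) (fun t ht => h0 t (hu ▸ ht))]
    simp
  rw [hA] at lower
  simpa using lower
end

section
/- Integral form of the Gronwall lemma: if u(t) ≤ α(t) + ∫₀^t β·u for every t ∈ [0,T], then u(t) ≤ α(t) + ∫₀^t β(ρ)·α(ρ)·exp(∫_ρ^t β) dρ for every t ∈ [0,T]. -/
open Set

theorem gronwall_aux (T : ℝ) (u α β : ℝ → ℝ)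
    (hu : Continuous u) (hα : Continuous α) (hβ : Continuous β)
    (hβ_nonneg : ∀ t ∈ Icc (0:ℝ) T, 0 ≤ β t)
    (h : ∀ t ∈ Icc (0:ℝ) T, u t ≤ α t + ∫ s in (0:ℝ)..t, β s * u s) :
    ∀ t ∈ Icc (0:ℝ) T,
      u t ≤ α t + ∫ ρ in (0:ℝ)..t, β ρ * α ρ * Real.exp (∫ r in ρ..t, β r) := by
  intro t ht
  have hB : ∀ s, (∫ r in s..t, β r) = (∫ r in (0:ℝ)..t, β r) - ∫ r in (0:ℝ)..s, β r := fun s =>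
    (intervalIntegral.integral_interval_sub_left (hβ.intervalIntegrable _ _)
      (hβ.intervalIntegrable _ _)).symm
  have hdB : ∀ s, HasDerivAt (fun s => ∫ r in s..t, β r) (-β s) s := by
    intro s
    have h1 := (hβ.integral_hasStrictDerivAt 0 s).hasDerivAt.const_sub (∫ r in (0:ℝ)..t, β r)
    exact h1.congr_of_eventuallyEq (Filter.Eventually.of_forall hB)
  have hdV : ∀ s, HasDerivAt (fun s => ∫ r in (0:ℝ)..s, β r * u r) (β s * u s) s := fun s =>
    ((hβ.mul hu).integral_hasStrictDerivAt 0 s).hasDerivAt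
  have hd := fun s => (hdV s).mul (hdB s).exp
  have hcB : Continuous (fun s => ∫ r in s..t, β r) :=
    continuous_iff_continuousAt.2 fun s => (hdB s).continuousAt
  have key := intervalIntegral.sub_le_integral_of_hasDeriv_right_of_le
    (φ := fun ρ => β ρ * α ρ * Real.exp (∫ r in ρ..t, β r)) ht.1
    (fun s _ => (hd s).continuousAt.continuousWithinAt)
    (fun s _ => (hd s).hasDerivWithinAt)
    (((hβ.mul hα).mul hcB.rexp).continuousOn.integrableOn_Icc)
    (by
      intro s hs
      have hs' : s ∈ Icc (0:ℝ) T := ⟨hs.1.le, hs.2.le.trans ht.2⟩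
      have h1 := mul_nonneg (mul_nonneg (hβ_nonneg s hs') (sub_nonneg.2 (h s hs')))
        (Real.exp_pos (∫ r in s..t, β r)).le
      linarith)
  simp at key
  linarith [h t ht]

/-- Integral form of the Gronwall lemma: if
`u t ≤ α t + ∫₀ᵗ β·u` for every `t ∈ [0,T]`, then
`u t ≤ α t + ∫₀ᵗ β(ρ)·α(ρ)·exp(∫_ρᵗ β) dρ` for every `t ∈ [0,T]`. -/
theorem gronwall_integral_form
    (T : ℝ) (hT : 0 < T) (u α β : ℝ → ℝ)
    (hu_cont : ContinuousOn u (Icc 0 T))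
    (hα_cont : ContinuousOn α (Icc 0 T))
    (hβ_cont : ContinuousOn β (Icc 0 T))
    (hβ_nonneg : ∀ t ∈ Icc (0:ℝ) T, 0 ≤ β t)
    (h : ∀ t ∈ Icc (0:ℝ) T, u t ≤ α t + ∫ s in (0:ℝ)..t, β s * u s) :
    ∀ t ∈ Icc (0:ℝ) T,
      u t ≤ α t + ∫ ρ in (0:ℝ)..t, β ρ * α ρ * Real.exp (∫ r in ρ..t, β r) := by
  have ext : ∀ f : ℝ → ℝ, ContinuousOn f (Icc 0 T) →
      ∃ g : ℝ → ℝ, Continuous g ∧ ∀ x ∈ Icc (0:ℝ) T, g x = f x := fun f hf =>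
    ⟨IccExtend hT.le ((Icc 0 T).domRestrict f), hf.domRestrict.Icc_extend', fun x hx => by
      rw [IccExtend_of_mem hT.le _ hx]; rfl⟩
  obtain ⟨u', hu', eu⟩ := ext u hu_cont
  obtain ⟨α', hα', eα⟩ := ext α hα_cont
  obtain ⟨β', hβ', eβ⟩ := ext β hβ_cont
  have sub : ∀ a ∈ Icc (0:ℝ) T, ∀ b ∈ Icc (0:ℝ) T, ∀ x ∈ uIcc a b, x ∈ Icc (0:ℝ) T :=
    fun a ha b hb x hx => uIcc_subset_Icc ha hb hx
  have h0 : (0:ℝ) ∈ Icc (0:ℝ) T := ⟨le_rfl, hT.le⟩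
  have main := gronwall_aux T u' α' β' hu' hα' hβ'
    (fun t ht => by rw [eβ t ht]; exact hβ_nonneg t ht)
    (fun t ht => by
      rw [eu t ht, eα t ht, intervalIntegral.integral_congr (g := fun s => β s * u s)]
      · exact h t ht
      · intro x hx
        have := sub 0 h0 t ht x hx
        simp only [eβ x this, eu x this])
  intro t ht
  have m := main t ht
  rw [eu t ht, eα t ht, intervalIntegral.integral_congr
    (g := fun ρ => β ρ * α ρ * Real.exp (∫ r in ρ..t, β r))] at m
  · exact m
  · intro x hx
    have hx' := sub 0 h0 t ht x hx
    have e : (∫ r in x..t, β' r) = ∫ r in x..t, β r :=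
      intervalIntegral.integral_congr fun y hy => eβ y (sub x hx' t ht y hy)
    simp only [eβ x hx', eα x hx', e]
end

section
/- The van Genuchten relative permeability satisfies the requirements of assumption (P1): the function κ(s) = √s · (1 − (1 − s^(1/λ))^λ)² is strictly increasing on [0,1], with κ(0) = 0, κ(1) = 1, and 0 < κ(s) < 1 for every s ∈ (0,1). -/
open Set

/-- The van Genuchten relative permeability
`κ s = √s · (1 − (1 − s^(1/λ))^λ)²` (rpow powers) satisfies the requirements of (P1):
it is strictly increasing on `[0,1]`, `κ 0 = 0`, `κ 1 = 1`, and `0 < κ s < 1`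
for every `s ∈ (0,1)`. -/
theorem vanGenuchten_kappa_P1 (lam : ℝ) (hlam : lam ∈ Ioo (0:ℝ) 1)
    (κ : ℝ → ℝ)
    (hκ : ∀ s : ℝ, κ s = Real.sqrt s * (1 - (1 - s ^ (1 / lam)) ^ lam) ^ 2) :
    StrictMonoOn κ (Icc (0:ℝ) 1) ∧ κ 0 = 0 ∧ κ 1 = 1 ∧
    ∀ s ∈ Ioo (0:ℝ) 1, 0 < κ s ∧ κ s < 1 := by
  obtain ⟨h0, h1⟩ := hlam
  have hp : 0 < 1 / lam := by positivity
  have k0 : κ 0 = 0 := by simp [hκ]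
  have k1 : κ 1 = 1 := by simp [hκ, Real.zero_rpow h0.ne']
  have mono : StrictMonoOn κ (Icc (0:ℝ) 1) := by
    intro a ha b hb hab
    rw [hκ a, hκ b]
    have ha1 : a ^ (1 / lam) ≤ 1 := Real.rpow_le_one ha.1 ha.2 hp.le
    have hb1 : b ^ (1 / lam) ≤ 1 := Real.rpow_le_one hb.1 hb.2 hp.le
    have ha0 : 0 ≤ a ^ (1 / lam) := Real.rpow_nonneg ha.1 _
    have hlt : a ^ (1 / lam) < b ^ (1 / lam) := Real.rpow_lt_rpow ha.1 hab hp
    have h2 : (1 - b ^ (1 / lam)) ^ lam < (1 - a ^ (1 / lam)) ^ lam :=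
      Real.rpow_lt_rpow (by linarith) (by linarith) h0
    have h3 : (1 - a ^ (1 / lam)) ^ lam ≤ 1 :=
      Real.rpow_le_one (by linarith) (by linarith) h0.le
    have h4 : Real.sqrt a < Real.sqrt b := Real.sqrt_lt_sqrt ha.1 hab
    have h5 : (1 - (1 - a ^ (1 / lam)) ^ lam) ^ 2 < (1 - (1 - b ^ (1 / lam)) ^ lam) ^ 2 :=
      pow_lt_pow_left₀ (by linarith) (by linarith) (by norm_num)
    exact mul_lt_mul'' h4 h5 (Real.sqrt_nonneg _) (sq_nonneg _)
  refine ⟨mono, k0, k1, fun s hs => ⟨?_, ?_⟩⟩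
  · rw [← k0]
    exact mono ⟨le_refl _, zero_le_one⟩ ⟨hs.1.le, hs.2.le⟩ hs.1
  · rw [← k1]
    exact mono ⟨hs.1.le, hs.2.le⟩ ⟨zero_le_one, le_refl _⟩ hs.2
end

section
/- The Brooks–Corey saturation function satisfies assumption (P2): S is Lipschitz continuous on ℝ with Lipschitz constant λ/p_M; S is strictly increasing on (−∞, p_M] with S(p_M) = 1 and 0 < S(p) < 1 for every p < p_M; and S(p) → 0 as p → −∞. -/
open Set Filter

lemma bc_key (l a b : ℝ) (hl : 0 < l) (ha : 1 ≤ a) (hab : a ≤ b) :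
    a ^ (-l) - b ^ (-l) ≤ l * (b - a) := by
  have ha0 : 0 < a := by linarith
  have hb0 : 0 < b := by linarith
  have h1 : a ^ (-l) ≤ 1 := Real.rpow_le_one_of_one_le_of_nonpos ha (by linarith)
  have h0 : 0 < a ^ (-l) := Real.rpow_pos_of_pos ha0 _
  have hba : 0 < b / a := by positivity
  have e : b ^ (-l) = a ^ (-l) * (b / a) ^ (-l) := by
    rw [← Real.mul_rpow ha0.le hba.le]
    congr 1
    field_simp
  have h2 : 1 - l * (b / a - 1) ≤ (b / a) ^ (-l) := by
    rw [Real.rpow_def_of_pos hba]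
    have := Real.add_one_le_exp (Real.log (b / a) * -l)
    have h3 := Real.log_le_sub_one_of_pos hba
    nlinarith
  have h4 : b / a - 1 ≤ b - a := by
    rw [div_sub_one ha0.ne']
    exact div_le_self (by linarith) ha
  have h5 : 1 - (b / a) ^ (-l) ≤ l * (b - a) := by nlinarith
  have h6 : 0 ≤ l * (b - a) := mul_nonneg hl.le (by linarith)
  rw [e]
  nlinarith

/-- The Brooks–Corey saturation function
(`S p = (2 − p/p_M)^(−λ)` for `p ≤ p_M`, `S p = 1` for `p > p_M`; rpow powers)
satisfies (P2): `S` is Lipschitz on ℝ with constant `λ/p_M`; `S` is strictly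
increasing on `(−∞, p_M]` with `S p_M = 1` and `0 < S p < 1` for `p < p_M`;
and `S p → 0` as `p → −∞`. -/
theorem brooksCorey_S_P2 (lam pM : ℝ) (hlam : 0 < lam) (hpM : 0 < pM)
    (S : ℝ → ℝ)
    (hS_le : ∀ p ≤ pM, S p = (2 - p / pM) ^ (-lam))
    (hS_gt : ∀ p > pM, S p = 1) :
    (∀ p q : ℝ, |S p - S q| ≤ lam / pM * |p - q|) ∧
    StrictMonoOn S (Iic pM) ∧
    S pM = 1 ∧
    (∀ p < pM, 0 < S p ∧ S p < 1) ∧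
    Tendsto S atBot (nhds 0) := by
  have hge : ∀ p ≤ pM, 1 ≤ 2 - p / pM := by
    intro p hp
    have : p / pM ≤ 1 := (div_le_one hpM).2 hp
    linarith
  have hmono : StrictMonoOn S (Iic pM) := by
    intro p hp q hq hpq
    rw [hS_le p hp, hS_le q hq]
    have := hge q hq
    have h : p / pM < q / pM := div_lt_div_of_pos_right hpq hpM
    exact Real.rpow_lt_rpow_of_neg (by linarith) (by linarith) (by linarith)
  have hone : S pM = 1 := by
    rw [hS_le pM le_rfl, div_self hpM.ne']
    norm_num
  have hform : ∀ p, S p = (max 1 (2 - p / pM)) ^ (-lam) := by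
    intro p
    rcases le_or_gt p pM with h | h
    · rw [hS_le p h, max_eq_right (hge p h)]
    · have : 1 < p / pM := (one_lt_div hpM).2 h
      rw [hS_gt p h, max_eq_left (by linarith), Real.one_rpow]
  have hlip : ∀ p q : ℝ, p ≤ q → |S p - S q| ≤ lam / pM * |p - q| := by
    intro p q hpq
    have h : p / pM ≤ q / pM := div_le_div_of_nonneg_right hpq hpM.le
    have hm : max 1 (2 - q / pM) ≤ max 1 (2 - p / pM) := max_le_max le_rfl (by linarith)
    have h1 : (1 : ℝ) ≤ max 1 (2 - q / pM) := le_max_left _ _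
    have hk := bc_key lam _ _ hlam h1 hm
    have hle : (max 1 (2 - p / pM)) ^ (-lam) ≤ (max 1 (2 - q / pM)) ^ (-lam) :=
      Real.rpow_le_rpow_of_nonpos (by linarith) hm (by linarith)
    have hd : max 1 (2 - p / pM) - max 1 (2 - q / pM) ≤ q / pM - p / pM := by
      have : max 1 (2 - p / pM) ≤ max 1 (2 - q / pM) + (q / pM - p / pM) := by
        apply max_le
        · linarith
        · linarith [le_max_right 1 (2 - q / pM)]
      linarith
    rw [hform p, hform q, abs_of_nonpos (by linarith), abs_of_nonpos (by linarith)]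
    have e : lam / pM * -(p - q) = lam * (q / pM - p / pM) := by ring
    rw [e]
    have := mul_le_mul_of_nonneg_left hd hlam.le
    linarith
  refine ⟨?_, hmono, hone, ?_, ?_⟩
  · intro p q
    rcases le_total p q with h | h
    · exact hlip p q h
    · rw [abs_sub_comm, abs_sub_comm p q]
      exact hlip q p h
  · intro p hp
    refine ⟨?_, ?_⟩
    · rw [hS_le p hp.le]
      exact Real.rpow_pos_of_pos (by linarith [hge p hp.le]) _
    · rw [← hone]
      exact hmono (mem_Iic.2 hp.le) (mem_Iic.2 le_rfl) hp
  · have h1 : Tendsto (fun p : ℝ => 2 - p / pM) atBot atTop := by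
      have : Tendsto (fun p : ℝ => p / pM) atBot atBot := tendsto_id.atBot_div_const hpM
      have h2 := tendsto_atTop_add_const_left atBot (2 : ℝ) (tendsto_neg_atBot_atTop.comp this)
      exact h2.congr (fun p => by simp [sub_eq_add_neg])
    have h2 := (tendsto_rpow_neg_atTop hlam).comp h1
    refine h2.congr' ?_
    filter_upwards [eventually_le_atBot pM] with p hp
    exact (hS_le p hp).symm
end
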